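/- For every monotone nondecreasing function v : ℕ → ℝ with v(k) ≥ 0 for all k, the series ∑_{k=1}^∞ v(k)·exp(−k·v(k)) converges (the family k ↦ v(k)·exp(−k·v(k)) is summable). -/

import Mathlib

/-- For every monotone nondecreasing function `v : ℕ → ℝ` with `v k ≥ 0` for all `k`,
the family `k ↦ v k * exp (-k * v k)` is summable. -/
theorem summable_monotone_mul_exp_neg (v : ℕ → ℝ) (hmono : Monotone v)
    (hnonneg : ∀ k, 0 ≤ v k) :
    Summable (fun k : ℕ => v k * Real.exp (-(k : ℝ) * v k)) := by
  by_cases hzero : ∀ k, v k = 0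
  · simp [hzero, summable_zero]
  obtain ⟨K, hK⟩ := not_forall.mp hzero
  have hpos : 0 < v K := (hnonneg K).lt_of_ne' hK
  rw [← summable_nat_add_iff (K + 1)]
  refine Summable.of_nonneg_of_le
    (fun k => mul_nonneg (hnonneg _) (Real.exp_pos _).le) (fun k => ?_)
    (Real.summable_exp_nat_mul_iff.mpr (neg_lt_zero.mpr hpos))
  have hle : v K ≤ v (k + (K + 1)) := hmono (by omega)
  set x := v (k + (K + 1))
  have hx : 0 ≤ x := hpos.le.trans hle
  have hexp : x ≤ Real.exp x := by linarith [Real.add_one_le_exp x]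
  calc x * Real.exp (-((k + (K + 1) : ℕ) : ℝ) * x)
      ≤ Real.exp x * Real.exp (-((k + (K + 1) : ℕ) : ℝ) * x) := by gcongr
    _ = Real.exp (x + -((k + (K + 1) : ℕ) : ℝ) * x) := (Real.exp_add _ _).symm
    _ ≤ Real.exp (k * -v K) := by
      apply Real.exp_le_exp.mpr
      push_cast
      nlinarith [mul_le_mul_of_nonneg_left hle (Nat.cast_nonneg (α := ℝ) k),
        mul_nonneg (Nat.cast_nonneg (α := ℝ) K) hx]
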